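/- (Lemma A.4: variance-aware empirical two-sample bound on the MMD.) Let 𝒳 be a measurable additive group, H a real separable Hilbert space, and φ : 𝒳 → H a bounded measurable feature map; let g(x,y) := ⟨φ(x), φ(y)⟩ be translation invariant with range g̃ := sup g − inf g. Let ν_i, ν_j be probability measures on 𝒳 with KMEs μ_i, μ_j. Let X^i_1,…,X^i_n and X^j_1,…,X^j_n be mutually independent samples with X^i_t ∼ ν_i and X^j_t ∼ ν_j i.i.d., n ≥ 2; define the empirical KMEs μ̂_i := (1/n)Σ_t φ(X^i_t), μ̂_j := (1/n)Σ_t φ(X^j_t) and the empirical variances 𝒱̂_i := (1/(n−1)) Σ_t ( g(X^i_t,X^i_t) − (1/n)Σ_s g(X^i_t,X^i_s) ) and similarly 𝒱̂_j. Then for every δ' ∈ (0,1], with probability at least 1 − δ', | ‖μ̂_j − μ̂_i‖ − ‖μ_j − μ_i‖ | ≤ (√𝒱̂_i + √𝒱̂_j)·√(2·log(8/δ')/n) + (32/3)·√g̃·log(8/δ')/n. -/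

import Mathlib

open MeasureTheory ProbabilityTheory Finset

noncomputable section

/-- The kernel `g(x,y) = ⟪φ x, φ y⟫` associated with the feature map `φ`. -/
def kerG {𝒳 H : Type*} [NormedAddCommGroup H] [InnerProductSpace ℝ H]
    (φ : 𝒳 → H) (x y : 𝒳) : ℝ :=
  inner ℝ (φ x) (φ y)

/-- The range `g̃ = sup_{x,y} g(x,y) − inf_{x,y} g(x,y)` of the kernel. -/
def kerRange {𝒳 H : Type*} [NormedAddCommGroup H] [InnerProductSpace ℝ H]
    (φ : 𝒳 → H) : ℝ :=
  (⨆ p : 𝒳 × 𝒳, kerG φ p.1 p.2) - (⨅ p : 𝒳 × 𝒳, kerG φ p.1 p.2)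

/-- The kernel mean embedding `μ_ν = E_{X∼ν}[φ(X)]` (a Bochner integral). -/
def KME {𝒳 H : Type*} [MeasurableSpace 𝒳] [NormedAddCommGroup H] [InnerProductSpace ℝ H]
    (φ : 𝒳 → H) (ν : Measure 𝒳) : H :=
  ∫ x, φ x ∂ν

/-- The empirical kernel mean embedding `μ̂ = (1/n) Σ_{t<n} φ(x_t)`. -/
def empKME {𝒳 H : Type*} [NormedAddCommGroup H] [InnerProductSpace ℝ H]
    (φ : 𝒳 → H) (n : ℕ) (x : ℕ → 𝒳) : H :=
  (n : ℝ)⁻¹ • ∑ t ∈ range n, φ (x t)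

/-- The empirical RKHS variance
`𝒱̂ = (1/(n−1)) Σ_{t<n} (g(x_t,x_t) − (1/n) Σ_{s<n} g(x_t,x_s))`. -/
def empVar {𝒳 H : Type*} [NormedAddCommGroup H] [InnerProductSpace ℝ H]
    (φ : 𝒳 → H) (n : ℕ) (x : ℕ → 𝒳) : ℝ :=
  ((n : ℝ) - 1)⁻¹ * ∑ t ∈ range n,
    (kerG φ (x t) (x t) - (n : ℝ)⁻¹ * ∑ s ∈ range n, kerG φ (x t) (x s))

/-!
The empirical mean embedding concentrates by a Bernstein inequality in Hilbert space. Pinelis' bound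
`cosh ‖x + v‖ ≤ cosh ‖x‖ (exp ‖v‖ - ‖v‖) + (sinh ‖x‖ / ‖x‖) ⟪x, v⟫` loses its linear term when
integrated over a centred `v`, so `cosh ‖∑ Z_t‖` is a supermartingale up to explicit factors, and
Markov's inequality gives the same tail as for real variables.

This bound involves the unknown standard deviation `σ`. The squared deviations `‖φ(X_t) - μ‖²` are
bounded and nonnegative, so their mean satisfies a sub-Gaussian lower tail with variance proxy
proportional to `σ²`; it exceeds the empirical variance by at most `‖μ̂ - μ‖²`, which the first
bound controls again, whence `σ ≤ √𝒱̂ + O(√(L/n))`. The constants rest on the feature map having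
diameter `d ≤ √(2g̃)`, which also forces `2σ² ≤ d²`.

Each sample fails with probability at most `3 exp (-L) = 3δ'/8`, and the triangle inequality
combines the two samples.
-/

section Scalar

lemma convexOn_cosh_sqrt : ConvexOn ℝ (Set.Ici 0) fun t : ℝ => Real.cosh √t := by
  refine ⟨convex_Ici 0, fun x hx y hy a b ha hb hab => ?_⟩
  have hasSum_cosh_sqrt : ∀ t ∈ Set.Ici (0 : ℝ),
      HasSum (fun k : ℕ => t ^ k / (2 * k).factorial) (Real.cosh √t) := fun t ht => by
    simpa only [pow_mul, Real.sq_sqrt ht] using Real.hasSum_cosh √t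
  refine hasSum_le (fun k => ?_) (hasSum_cosh_sqrt _ (convex_Ici 0 hx hy ha hb hab))
    (((hasSum_cosh_sqrt x hx).const_smul a).add ((hasSum_cosh_sqrt y hy).const_smul b))
  have hconv := (convexOn_pow (𝕜 := ℝ) k).2 hx hy ha hb hab
  simp only [smul_eq_mul] at hconv ⊢
  rw [← mul_div_assoc, ← mul_div_assoc, ← add_div]
  gcongr

lemma exp_le_one_add_add_sq_div {u M : ℝ} (hu : 0 ≤ u) (huM : u ≤ M) (hM : M < 3) :
    Real.exp u ≤ 1 + u + u ^ 2 / (2 * (1 - M / 3)) := by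
  have hexp : HasSum (fun k : ℕ => u ^ (k + 2) / (k + 2).factorial) (Real.exp u - (1 + u)) := by
    have h := (hasSum_nat_add_iff' 2).2 (NormedSpace.expSeries_div_hasSum_exp u)
    simpa [Real.exp_eq_exp_ℝ, Finset.sum_range_succ] using h
  have hgeom : HasSum (fun k : ℕ => u ^ 2 / 2 * (u / 3) ^ k) (u ^ 2 / 2 * (1 - u / 3)⁻¹) :=
    (hasSum_geometric_of_lt_one (by positivity) (by linarith)).mul_left _
  have hterm : ∀ k : ℕ, u ^ (k + 2) / (k + 2).factorial ≤ u ^ 2 / 2 * (u / 3) ^ k := fun k => by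
    have hfact : (2 : ℝ) * 3 ^ k ≤ (k + 2).factorial := by
      rw [add_comm k 2]
      exact_mod_cast Nat.factorial_mul_pow_le_factorial (m := 2) (n := k)
    calc u ^ (k + 2) / (k + 2).factorial ≤ u ^ (k + 2) / (2 * 3 ^ k) := by gcongr
      _ = u ^ 2 / 2 * (u / 3) ^ k := by rw [div_pow, pow_add]; field_simp
  have hmono : u ^ 2 / 2 * (1 - u / 3)⁻¹ ≤ u ^ 2 / (2 * (1 - M / 3)) := by
    rw [← div_eq_mul_inv, div_div]
    gcongr
    linarith
  linarith [hasSum_le hterm hexp hgeom]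

lemma exp_neg_le_one_sub_add_sq_div_two {u : ℝ} (hu : 0 ≤ u) :
    Real.exp (-u) ≤ 1 - u + u ^ 2 / 2 := by
  have hpos : 0 ≤ 1 - u + u ^ 2 / 2 := by nlinarith [sq_nonneg (u - 1)]
  rw [Real.exp_neg, inv_le_iff_one_le_mul₀ (Real.exp_pos u)]
  calc 1 ≤ (1 - u + u ^ 2 / 2) * (1 + u + u ^ 2 / 2) := by nlinarith [sq_nonneg (u ^ 2)]
    _ ≤ (1 - u + u ^ 2 / 2) * Real.exp u := by
      gcongr
      exact Real.quadratic_le_exp_of_nonneg hu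

lemma sqrt_two_mul_nat_mul_eq {n : ℕ} {v L : ℝ} (hn : n ≠ 0) (hv : 0 ≤ v) :
    √(2 * (n * v) * L) = n * (√v * √(2 * L / n)) := by
  have hn_pos : (0 : ℝ) < n := by positivity
  rw [← Real.sqrt_mul hv, ← Real.sqrt_sq hn_pos.le, ← Real.sqrt_mul (sq_nonneg _),
    Real.sqrt_sq hn_pos.le]
  congr 1
  field_simp

end Scalar

section SquareMoments

variable {H Ω ι : Type*} [NormedAddCommGroup H] [MeasurableSpace Ω] {P : Measure Ω}

lemma integrable_norm_sq_of_norm_le [IsFiniteMeasure P] {W : Ω → H} {M : ℝ}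
    (hW : AEStronglyMeasurable W P) (hbound : ∀ᵐ ω ∂P, ‖W ω‖ ≤ M) :
    Integrable (fun ω => ‖W ω‖ ^ 2) P :=
  .of_bound (hW.norm.pow 2) (M ^ 2) <| by
    filter_upwards [hbound] with ω hω
    rw [norm_pow, norm_norm]
    gcongr

lemma ae_sum_eq_zero_of_sum_integral_norm_sq_eq_zero {Z : ι → Ω → H} {s : Finset ι}
    (hint : ∀ t ∈ s, Integrable (fun ω => ‖Z t ω‖ ^ 2) P)
    (hzero : ∑ t ∈ s, ∫ ω, ‖Z t ω‖ ^ 2 ∂P = 0) : ∀ᵐ ω ∂P, ∑ t ∈ s, Z t ω = 0 := by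
  have hterm := (Finset.sum_eq_zero_iff_of_nonneg fun t _ => by positivity).1 hzero
  have hZ_zero : ∀ᵐ ω ∂P, ∀ t ∈ s, Z t ω = 0 :=
    (ae_ball_iff s.countable_toSet).2 fun t ht => by
      filter_upwards [(integral_eq_zero_iff_of_nonneg (fun ω => by positivity) (hint t ht)).1
        (hterm t ht)] with ω hω
      simpa using hω
  filter_upwards [hZ_zero] with ω hω using Finset.sum_eq_zero hω

lemma integral_exp_norm_sub_norm_le [IsProbabilityMeasure P] {W : Ω → H} {M : ℝ}
    (hW : AEStronglyMeasurable W P) (hbound : ∀ᵐ ω ∂P, ‖W ω‖ ≤ M) (hM : M < 3) :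
    ∫ ω, (Real.exp ‖W ω‖ - ‖W ω‖) ∂P ≤ 1 + (∫ ω, ‖W ω‖ ^ 2 ∂P) / (2 * (1 - M / 3)) := by
  have hsq := integrable_norm_sq_of_norm_le hW hbound
  calc ∫ ω, (Real.exp ‖W ω‖ - ‖W ω‖) ∂P
      ≤ ∫ ω, (1 + ‖W ω‖ ^ 2 / (2 * (1 - M / 3))) ∂P := by
        refine integral_mono_of_nonneg (.of_forall fun ω => ?_)
          ((integrable_const 1).add (hsq.div_const _)) ?_
        · exact sub_nonneg.2 ((le_add_of_nonneg_right zero_le_one).trans (Real.add_one_le_exp _))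
        · filter_upwards [hbound] with ω hω
          linarith [exp_le_one_add_add_sq_div (norm_nonneg (W ω)) hω hM]
    _ = 1 + (∫ ω, ‖W ω‖ ^ 2 ∂P) / (2 * (1 - M / 3)) := by
        rw [integral_add (integrable_const 1) (hsq.div_const _), integral_div, integral_const,
          probReal_univ, one_smul]

end SquareMoments

section HilbertBernstein

variable {H Ω ι : Type*} [NormedAddCommGroup H] [InnerProductSpace ℝ H] [MeasurableSpace Ω]
  {P : Measure Ω}

lemma cosh_norm_add_le (x v : H) :
    Real.cosh ‖x + v‖ ≤ Real.cosh ‖x‖ * Real.cosh ‖v‖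
      + inner ℝ x v / (‖x‖ * ‖v‖) * (Real.sinh ‖x‖ * Real.sinh ‖v‖) := by
  set c : ℝ := inner ℝ x v / (‖x‖ * ‖v‖)
  have hc : -1 ≤ c ∧ c ≤ 1 := abs_le.1 (abs_real_inner_div_norm_mul_norm_le_one x v)
  have hinner : c * (‖x‖ * ‖v‖) = inner ℝ x v :=
    div_mul_cancel_of_imp fun h => by
      rcases mul_eq_zero.1 h with h | h <;> simp [norm_eq_zero.1 h]
  have hsq : (1 + c) / 2 * (‖x‖ + ‖v‖) ^ 2 + (1 - c) / 2 * (‖x‖ - ‖v‖) ^ 2 = ‖x + v‖ ^ 2 := by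
    rw [norm_add_sq_real, ← hinner]
    ring
  have hconv := convexOn_cosh_sqrt.2 (Set.mem_Ici.2 (sq_nonneg (‖x‖ + ‖v‖)))
    (Set.mem_Ici.2 (sq_nonneg (‖x‖ - ‖v‖))) (show 0 ≤ (1 + c) / 2 by linarith)
    (show 0 ≤ (1 - c) / 2 by linarith) (by ring)
  simp only [smul_eq_mul, hsq, Real.sqrt_sq_eq_abs, Real.cosh_abs, Real.cosh_add,
    Real.cosh_sub] at hconv
  linarith

lemma cosh_norm_add_le_mul_exp_sub_add_inner (x v : H) :
    Real.cosh ‖x + v‖ ≤ Real.cosh ‖x‖ * (Real.exp ‖v‖ - ‖v‖)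
      + Real.sinh ‖x‖ / ‖x‖ * inner ℝ x v := by
  set c : ℝ := inner ℝ x v / (‖x‖ * ‖v‖) with hc
  have hc_le : c ≤ 1 := (abs_le.1 (abs_real_inner_div_norm_mul_norm_le_one x v)).2
  have hlin : c * Real.sinh ‖x‖ * ‖v‖ = Real.sinh ‖x‖ / ‖x‖ * inner ℝ x v := by
    rcases eq_or_ne v 0 with rfl | hv
    · simp
    · have := norm_ne_zero_iff.2 hv
      rw [hc]
      field_simp
  have hsinh_v : 0 ≤ Real.sinh ‖v‖ - ‖v‖ := sub_nonneg.2 (Real.self_le_sinh_iff.2 (norm_nonneg v))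
  have hc_sinh : c * Real.sinh ‖x‖ ≤ Real.cosh ‖x‖ :=
    (mul_le_of_le_one_left (Real.sinh_nonneg_iff.2 (norm_nonneg x)) hc_le).trans
      (Real.sinh_lt_cosh _).le
  calc Real.cosh ‖x + v‖
      ≤ Real.cosh ‖x‖ * Real.cosh ‖v‖ + c * (Real.sinh ‖x‖ * Real.sinh ‖v‖) := cosh_norm_add_le x v
    _ = Real.cosh ‖x‖ * Real.cosh ‖v‖ + c * Real.sinh ‖x‖ * (Real.sinh ‖v‖ - ‖v‖)
          + c * Real.sinh ‖x‖ * ‖v‖ := by ring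
    _ ≤ Real.cosh ‖x‖ * Real.cosh ‖v‖ + Real.cosh ‖x‖ * (Real.sinh ‖v‖ - ‖v‖)
          + c * Real.sinh ‖x‖ * ‖v‖ := by gcongr
    _ = Real.cosh ‖x‖ * (Real.exp ‖v‖ - ‖v‖) + Real.sinh ‖x‖ / ‖x‖ * inner ℝ x v := by
      rw [hlin, ← Real.cosh_add_sinh]
      ring

lemma lintegral_cosh_norm_const_add_le [CompleteSpace H] {W : Ω → H}
    (hW : AEStronglyMeasurable W P) (hexp : Integrable (fun ω => Real.exp ‖W ω‖) P)
    (hmean : ∫ ω, W ω ∂P = 0) (x : H) :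
    ∫⁻ ω, ENNReal.ofReal (Real.cosh ‖x + W ω‖) ∂P ≤
      ENNReal.ofReal (Real.cosh ‖x‖) * ENNReal.ofReal (∫ ω, (Real.exp ‖W ω‖ - ‖W ω‖) ∂P) := by
  have hint : Integrable W P := hexp.mono' hW <| .of_forall fun ω =>
    (le_add_of_nonneg_right zero_le_one).trans (Real.add_one_le_exp _)
  have hquad : Integrable (fun ω => Real.cosh ‖x‖ * (Real.exp ‖W ω‖ - ‖W ω‖)) P :=
    (hexp.sub hint.norm).const_mul (Real.cosh ‖x‖)
  have hlin : Integrable (fun ω => Real.sinh ‖x‖ / ‖x‖ * inner ℝ x (W ω)) P :=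
    (hint.const_inner x).const_mul (Real.sinh ‖x‖ / ‖x‖)
  have hpoint := fun ω => cosh_norm_add_le_mul_exp_sub_add_inner x (W ω)
  calc ∫⁻ ω, ENNReal.ofReal (Real.cosh ‖x + W ω‖) ∂P
      ≤ ∫⁻ ω, ENNReal.ofReal (Real.cosh ‖x‖ * (Real.exp ‖W ω‖ - ‖W ω‖)
          + Real.sinh ‖x‖ / ‖x‖ * inner ℝ x (W ω)) ∂P :=
        lintegral_mono fun ω => ENNReal.ofReal_le_ofReal (hpoint ω)
    _ = ENNReal.ofReal (∫ ω, (Real.cosh ‖x‖ * (Real.exp ‖W ω‖ - ‖W ω‖)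
          + Real.sinh ‖x‖ / ‖x‖ * inner ℝ x (W ω)) ∂P) :=
        (ofReal_integral_eq_lintegral_ofReal (hquad.add hlin) <|
          .of_forall fun ω => (Real.cosh_pos _).le.trans (hpoint ω)).symm
    _ = ENNReal.ofReal (Real.cosh ‖x‖ * ∫ ω, (Real.exp ‖W ω‖ - ‖W ω‖) ∂P) := by
      have hcentred : ∫ ω, inner ℝ x (W ω) ∂P = 0 := by
        rw [integral_inner hint, hmean, inner_zero_right]
      rw [integral_add hquad hlin, integral_const_mul, integral_const_mul, hcentred, mul_zero,
        add_zero]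
    _ = _ := ENNReal.ofReal_mul (Real.cosh_pos _).le

lemma lintegral_comp_prodMk_of_indepFun [IsFiniteMeasure P] {E F : Type*} [MeasurableSpace E]
    [MeasurableSpace F] {X : Ω → E} {Y : Ω → F} (hX : AEMeasurable X P) (hY : AEMeasurable Y P)
    (hXY : X ⟂ᵢ[P] Y) {f : E × F → ENNReal} (hf : Measurable f) :
    ∫⁻ ω, f (X ω, Y ω) ∂P = ∫⁻ ω, ∫⁻ ω', f (X ω, Y ω') ∂P ∂P := by
  calc ∫⁻ ω, f (X ω, Y ω) ∂P = ∫⁻ p, f p ∂(P.map fun ω => (X ω, Y ω)) :=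
        (lintegral_map' hf.aemeasurable (hX.prodMk hY)).symm
    _ = ∫⁻ x, ∫⁻ y, f (x, y) ∂(P.map Y) ∂(P.map X) := by
      rw [hXY.map_prod_eq_prod_map_map hX hY, lintegral_prod _ hf.aemeasurable]
    _ = ∫⁻ ω, ∫⁻ y, f (X ω, y) ∂(P.map Y) ∂P :=
      lintegral_map' hf.lintegral_prod_right'.aemeasurable hX
    _ = ∫⁻ ω, ∫⁻ ω', f (X ω, Y ω') ∂P ∂P := lintegral_congr fun ω =>
      lintegral_map' (hf.comp measurable_prodMk_left).aemeasurable hY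

variable [CompleteSpace H] [SecondCountableTopology H] [MeasurableSpace H] [BorelSpace H]
  [IsProbabilityMeasure P]

lemma lintegral_cosh_norm_sum_le {W : ι → Ω → H} (hW : ∀ t, AEMeasurable (W t) P)
    (hindep : iIndepFun W P) (hexp : ∀ t, Integrable (fun ω => Real.exp ‖W t ω‖) P)
    (hmean : ∀ t, ∫ ω, W t ω ∂P = 0) (s : Finset ι) :
    ∫⁻ ω, ENNReal.ofReal (Real.cosh ‖∑ t ∈ s, W t ω‖) ∂P ≤
      ∏ t ∈ s, ENNReal.ofReal (∫ ω, (Real.exp ‖W t ω‖ - ‖W t ω‖) ∂P) := by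
  classical
  induction s using Finset.induction_on with
  | empty => simp
  | insert t s ht ih =>
    have hcosh : Measurable fun p : H × H => ENNReal.ofReal (Real.cosh ‖p.1 + p.2‖) := by
      have := Real.continuous_cosh.measurable
      fun_prop
    have hsum_indep : (fun ω => ∑ i ∈ s, W i ω) ⟂ᵢ[P] W t := by
      simpa only [Finset.sum_fn] using hindep.indepFun_finsetSum_of_notMem₀ hW ht
    calc ∫⁻ ω, ENNReal.ofReal (Real.cosh ‖∑ i ∈ insert t s, W i ω‖) ∂P
        = ∫⁻ ω, ENNReal.ofReal (Real.cosh ‖∑ i ∈ s, W i ω + W t ω‖) ∂P := by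
          simp only [Finset.sum_insert ht, add_comm]
      _ = ∫⁻ ω, ∫⁻ ω', ENNReal.ofReal (Real.cosh ‖∑ i ∈ s, W i ω + W t ω'‖) ∂P ∂P :=
        lintegral_comp_prodMk_of_indepFun (by fun_prop) (hW t) hsum_indep hcosh
      _ ≤ ∫⁻ ω, ENNReal.ofReal (Real.cosh ‖∑ i ∈ s, W i ω‖) *
            ENNReal.ofReal (∫ ω', (Real.exp ‖W t ω'‖ - ‖W t ω'‖) ∂P) ∂P :=
        lintegral_mono fun ω => lintegral_cosh_norm_const_add_le (hW t).aestronglyMeasurable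
          (hexp t) (hmean t) _
      _ = (∫⁻ ω, ENNReal.ofReal (Real.cosh ‖∑ i ∈ s, W i ω‖) ∂P) *
            ENNReal.ofReal (∫ ω', (Real.exp ‖W t ω'‖ - ‖W t ω'‖) ∂P) :=
        lintegral_mul_const' _ _ ENNReal.ofReal_ne_top
      _ ≤ ∏ i ∈ insert t s, ENNReal.ofReal (∫ ω, (Real.exp ‖W i ω‖ - ‖W i ω‖) ∂P) := by
        rw [Finset.prod_insert ht, mul_comm]
        gcongr

lemma lintegral_cosh_norm_sum_le_exp {W : ι → Ω → H} {s : Finset ι} {M V : ℝ}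
    (hW : ∀ t, AEMeasurable (W t) P) (hindep : iIndepFun W P) (hmean : ∀ t, ∫ ω, W t ω ∂P = 0)
    (hbound : ∀ t, ∀ᵐ ω ∂P, ‖W t ω‖ ≤ M) (hM : M < 3)
    (hV : ∑ t ∈ s, ∫ ω, ‖W t ω‖ ^ 2 ∂P ≤ V) :
    ∫⁻ ω, ENNReal.ofReal (Real.cosh ‖∑ t ∈ s, W t ω‖) ∂P ≤
      ENNReal.ofReal (Real.exp (V / (2 * (1 - M / 3)))) := by
  have hexp : ∀ t, Integrable (fun ω => Real.exp ‖W t ω‖) P := fun t =>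
    .of_bound (by fun_prop) (Real.exp M) <| by
      filter_upwards [hbound t] with ω hω
      rw [Real.norm_of_nonneg (Real.exp_pos _).le]
      gcongr
  have hden : 0 < 2 * (1 - M / 3) := by linarith
  calc ∫⁻ ω, ENNReal.ofReal (Real.cosh ‖∑ t ∈ s, W t ω‖) ∂P
      ≤ ∏ t ∈ s, ENNReal.ofReal (1 + (∫ ω, ‖W t ω‖ ^ 2 ∂P) / (2 * (1 - M / 3))) := by
        refine (lintegral_cosh_norm_sum_le hW hindep hexp hmean s).trans ?_
        gcongr with t
        exact integral_exp_norm_sub_norm_le (hW t).aestronglyMeasurable (hbound t) hM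
    _ = ENNReal.ofReal (∏ t ∈ s, (1 + (∫ ω, ‖W t ω‖ ^ 2 ∂P) / (2 * (1 - M / 3)))) :=
        (ENNReal.ofReal_prod_of_nonneg fun t _ => by positivity).symm
    _ ≤ ENNReal.ofReal (Real.exp (V / (2 * (1 - M / 3)))) := by
        gcongr
        refine (Real.prod_one_add_le_exp_sum _ fun t => by positivity).trans ?_
        rw [← Finset.sum_div]
        gcongr

lemma measureReal_norm_sum_ge_le_exp_sub {W : ι → Ω → H} {s : Finset ι} {M V r : ℝ}
    (hW : ∀ t, AEMeasurable (W t) P) (hindep : iIndepFun W P) (hmean : ∀ t, ∫ ω, W t ω ∂P = 0)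
    (hbound : ∀ t, ∀ᵐ ω ∂P, ‖W t ω‖ ≤ M) (hM : M < 3)
    (hV : ∑ t ∈ s, ∫ ω, ‖W t ω‖ ^ 2 ∂P ≤ V) (hr : 0 ≤ r) :
    P.real {ω | r ≤ ‖∑ t ∈ s, W t ω‖} ≤ 2 * Real.exp (V / (2 * (1 - M / 3)) - r) := by
  have hcosh_meas : AEMeasurable (fun ω => ENNReal.ofReal (Real.cosh ‖∑ t ∈ s, W t ω‖)) P := by
    have := Real.continuous_cosh.measurable
    fun_prop
  have hmarkov : ENNReal.ofReal (Real.cosh r) * P {ω | r ≤ ‖∑ t ∈ s, W t ω‖} ≤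
      ENNReal.ofReal (Real.exp (V / (2 * (1 - M / 3)))) := by
    refine le_trans ?_ ((mul_meas_ge_le_lintegral₀ hcosh_meas (ENNReal.ofReal (Real.cosh r))).trans
      (lintegral_cosh_norm_sum_le_exp hW hindep hmean hbound hM hV))
    gcongr with ω
    intro hω
    exact ENNReal.ofReal_le_ofReal (Real.cosh_le_cosh.2 (abs_le_abs_of_nonneg hr hω))
  have hmarkov_real : Real.cosh r * P.real {ω | r ≤ ‖∑ t ∈ s, W t ω‖} ≤
      Real.exp (V / (2 * (1 - M / 3))) := by
    simpa only [measureReal_def, ENNReal.toReal_mul, ENNReal.toReal_ofReal (Real.cosh_pos r).le,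
      ENNReal.toReal_ofReal (Real.exp_pos _).le] using
        ENNReal.toReal_mono ENNReal.ofReal_ne_top hmarkov
  have hcosh_ge : Real.exp r / 2 ≤ Real.cosh r := by
    rw [Real.cosh_eq]
    linarith [Real.exp_pos (-r)]
  rw [Real.exp_sub, ← mul_div_assoc, le_div_iff₀ (Real.exp_pos r)]
  linarith [mul_le_mul_of_nonneg_right hcosh_ge
    (measureReal_nonneg (μ := P) (s := {ω | r ≤ ‖∑ t ∈ s, W t ω‖}))]

theorem measureReal_norm_sum_ge_le {Z : ι → Ω → H} {s : Finset ι} {M V r : ℝ}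
    (hZ : ∀ t, AEMeasurable (Z t) P) (hindep : iIndepFun Z P) (hmean : ∀ t, ∫ ω, Z t ω ∂P = 0)
    (hbound : ∀ t, ∀ᵐ ω ∂P, ‖Z t ω‖ ≤ M) (hM : 0 ≤ M)
    (hV : ∑ t ∈ s, ∫ ω, ‖Z t ω‖ ^ 2 ∂P ≤ V) (hV_pos : 0 < V) (hr : 0 ≤ r) :
    P.real {ω | r ≤ ‖∑ t ∈ s, Z t ω‖} ≤ 2 * Real.exp (-(r ^ 2 / (2 * (V + M * r / 3)))) := by
  have hden : 0 < V + M * r / 3 := by positivity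
  rcases hr.eq_or_lt with rfl | hr_pos
  · simp
  set l : ℝ := r / (V + M * r / 3) with hl
  have hl_pos : 0 < l := by positivity
  have hlM : 1 - l * M / 3 = V / (V + M * r / 3) := by
    rw [hl]
    field_simp
    ring
  have hnorm : ∀ x : H, ‖l • x‖ = l * ‖x‖ := fun x => by
    rw [norm_smul, Real.norm_of_nonneg hl_pos.le]
  have hscaled := measureReal_norm_sum_ge_le_exp_sub (P := P) (W := fun t ω => l • Z t ω) (s := s)
    (M := l * M) (V := l ^ 2 * V) (r := l * r) (fun t => (hZ t).const_smul l)
    (hindep.comp (fun _ x => l • x) fun _ => measurable_const_smul l)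
    (fun t => by rw [integral_smul, hmean, smul_zero])
    (fun t => by
      filter_upwards [hbound t] with ω hω
      rw [hnorm]
      gcongr)
    (by linarith [hlM, div_pos hV_pos hden])
    (by
      simp only [hnorm, mul_pow, integral_const_mul, ← Finset.mul_sum]
      gcongr)
    (by positivity)
  simp only [← Finset.smul_sum, hnorm, mul_le_mul_iff_right₀ hl_pos] at hscaled
  refine hscaled.trans_eq ?_
  congr 2
  rw [hlM, hl]
  field_simp
  ring

theorem measureReal_sqrt_add_lt_norm_sum_le {Z : ι → Ω → H} {s : Finset ι} {M L : ℝ}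
    (hZ : ∀ t, AEMeasurable (Z t) P) (hindep : iIndepFun Z P) (hmean : ∀ t, ∫ ω, Z t ω ∂P = 0)
    (hbound : ∀ t, ∀ᵐ ω ∂P, ‖Z t ω‖ ≤ M) (hM : 0 ≤ M) (hL : 0 ≤ L) :
    P.real {ω | √(2 * (∑ t ∈ s, ∫ ω, ‖Z t ω‖ ^ 2 ∂P) * L) + 2 * M * L / 3 < ‖∑ t ∈ s, Z t ω‖} ≤
      2 * Real.exp (-L) := by
  set V := ∑ t ∈ s, ∫ ω, ‖Z t ω‖ ^ 2 ∂P with hV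
  have hV_nonneg : 0 ≤ V := by positivity
  set r := √(2 * V * L) + 2 * M * L / 3 with hr
  rcases hV_nonneg.eq_or_lt with hV_zero | hV_pos
  · have hsum_zero := ae_sum_eq_zero_of_sum_integral_norm_sq_eq_zero (fun t _ =>
      integrable_norm_sq_of_norm_le (hZ t).aestronglyMeasurable (hbound t)) hV_zero.symm
    have hnull : P.real {ω | r < ‖∑ t ∈ s, Z t ω‖} = 0 := by
      rw [measureReal_eq_zero_iff, measure_eq_zero_iff_ae_notMem]
      filter_upwards [hsum_zero] with ω hω
      simp only [hω, norm_zero, not_lt]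
      positivity
    rw [hnull]
    positivity
  · calc P.real {ω | r < ‖∑ t ∈ s, Z t ω‖}
        ≤ P.real {ω | r ≤ ‖∑ t ∈ s, Z t ω‖} := measureReal_mono fun ω (hω : r < _) => hω.le
      _ ≤ 2 * Real.exp (-(r ^ 2 / (2 * (V + M * r / 3)))) :=
        measureReal_norm_sum_ge_le hZ hindep hmean hbound hM hV.ge hV_pos (by positivity)
      _ ≤ 2 * Real.exp (-L) := by
        gcongr
        rw [le_div_iff₀ (by positivity), hr]
        have hsqrt := Real.sq_sqrt (show 0 ≤ 2 * V * L by positivity)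
        nlinarith [mul_nonneg (mul_nonneg hM hL) (Real.sqrt_nonneg (2 * V * L)),
          mul_nonneg hM hL]

end HilbertBernstein

section LowerTail

variable {Ω ι : Type*} [MeasurableSpace Ω] {P : Measure Ω} [IsProbabilityMeasure P] {b : ℝ}

lemma mgf_neg_le_exp_of_mem_Icc {Y : Ω → ℝ} (hY : AEMeasurable Y P)
    (hbound : ∀ᵐ ω ∂P, Y ω ∈ Set.Icc 0 b) {l : ℝ} (hl : 0 ≤ l) :
    mgf Y P (-l) ≤ Real.exp ((l ^ 2 * b / 2 - l) * ∫ ω, Y ω ∂P) := by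
  have hint : Integrable Y P := .of_mem_Icc 0 b hY hbound
  calc mgf Y P (-l) ≤ ∫ ω, (1 + (l ^ 2 * b / 2 - l) * Y ω) ∂P := by
        refine integral_mono_ae (integrable_exp_mul_of_mem_Icc hY hbound)
          ((integrable_const 1).add (hint.const_mul _)) ?_
        filter_upwards [hbound] with ω ⟨hY_nonneg, hY_le⟩
        have hquad := exp_neg_le_one_sub_add_sq_div_two (mul_nonneg hl hY_nonneg)
        have hsq : l ^ 2 * (Y ω * Y ω) ≤ l ^ 2 * (b * Y ω) := by gcongr
        rw [neg_mul]
        linarith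
    _ = 1 + (l ^ 2 * b / 2 - l) * ∫ ω, Y ω ∂P := by
        rw [integral_add (integrable_const 1) (hint.const_mul _), integral_const_mul,
          integral_const, probReal_univ, one_smul]
    _ ≤ Real.exp ((l ^ 2 * b / 2 - l) * ∫ ω, Y ω ∂P) := by
        rw [add_comm]
        exact Real.add_one_le_exp _

theorem measureReal_sum_le_integral_sub_le {Y : ι → Ω → ℝ} {s : Finset ι}
    (hY : ∀ t, AEMeasurable (Y t) P) (hindep : iIndepFun Y P)
    (hbound : ∀ t, ∀ᵐ ω ∂P, Y t ω ∈ Set.Icc 0 b) (hb : 0 < b)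
    (hmean : 0 < ∑ t ∈ s, ∫ ω, Y t ω ∂P) {r : ℝ} (hr : 0 ≤ r) :
    P.real {ω | ∑ t ∈ s, Y t ω ≤ ∑ t ∈ s, ∫ ω, Y t ω ∂P - r} ≤
      Real.exp (-(r ^ 2 / (2 * b * ∑ t ∈ s, ∫ ω, Y t ω ∂P))) := by
  set m := ∑ t ∈ s, ∫ ω, Y t ω ∂P with hm
  set l : ℝ := r / (b * m) with hl
  have hl_nonneg : 0 ≤ l := by positivity
  have hsum_bound : ∀ᵐ ω ∂P, ∑ t ∈ s, Y t ω ∈ Set.Icc 0 (∑ _t ∈ s, b) := by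
    filter_upwards [(ae_ball_iff s.countable_toSet).2 fun t _ => hbound t] with ω hω
    exact ⟨Finset.sum_nonneg fun t ht => (hω t ht).1, Finset.sum_le_sum fun t ht => (hω t ht).2⟩
  have hint : Integrable (fun ω => Real.exp (-l * ∑ t ∈ s, Y t ω)) P :=
    integrable_exp_mul_of_mem_Icc (by fun_prop) hsum_bound
  calc P.real {ω | ∑ t ∈ s, Y t ω ≤ m - r}
      ≤ Real.exp (- -l * (m - r)) * mgf (fun ω => ∑ t ∈ s, Y t ω) P (-l) :=
        measure_le_le_exp_mul_mgf (m - r) (neg_nonpos.2 hl_nonneg) hint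
    _ = Real.exp (l * (m - r)) * ∏ t ∈ s, mgf (Y t) P (-l) := by
        rw [neg_neg, ← hindep.mgf_sum₀ hY, Finset.sum_fn]
    _ ≤ Real.exp (l * (m - r)) *
          ∏ t ∈ s, Real.exp ((l ^ 2 * b / 2 - l) * ∫ ω, Y t ω ∂P) := by
        gcongr with t
        · exact fun _ _ => mgf_nonneg
        · exact mgf_neg_le_exp_of_mem_Icc (hY t) (hbound t) hl_nonneg
    _ = Real.exp (-(r ^ 2 / (2 * b * m))) := by
        rw [← Real.exp_sum, ← Finset.mul_sum, ← hm, ← Real.exp_add, hl]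
        congr 1
        field_simp
        ring

theorem measureReal_sum_lt_integral_sub_sqrt_le {Y : ι → Ω → ℝ} {s : Finset ι}
    (hY : ∀ t, AEMeasurable (Y t) P) (hindep : iIndepFun Y P)
    (hbound : ∀ t, ∀ᵐ ω ∂P, Y t ω ∈ Set.Icc 0 b) (hb : 0 ≤ b) {L : ℝ} (hL : 0 ≤ L) :
    P.real {ω | ∑ t ∈ s, Y t ω <
        ∑ t ∈ s, ∫ ω, Y t ω ∂P - √(2 * b * (∑ t ∈ s, ∫ ω, Y t ω ∂P) * L)} ≤ Real.exp (-L) := by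
  set m := ∑ t ∈ s, ∫ ω, Y t ω ∂P
  have hm_nonneg : 0 ≤ m := Finset.sum_nonneg fun t _ =>
    integral_nonneg_of_ae ((hbound t).mono fun ω hω => hω.1)
  rcases hm_nonneg.eq_or_lt with hm_zero | hm_pos
  · have hnull : P.real {ω | ∑ t ∈ s, Y t ω < m - √(2 * b * m * L)} = 0 := by
      rw [measureReal_eq_zero_iff, measure_eq_zero_iff_ae_notMem]
      filter_upwards [(ae_ball_iff s.countable_toSet).2 fun t _ => hbound t] with ω hω
      simpa [← hm_zero] using Finset.sum_nonneg fun t ht => (hω t ht).1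
    rw [hnull]
    positivity
  · have hb_pos : 0 < b := hb.lt_of_ne' <| by
      rintro rfl
      exact hm_pos.ne' <| Finset.sum_eq_zero fun t _ =>
        integral_eq_zero_of_ae ((hbound t).mono fun ω hω => le_antisymm hω.2 hω.1)
    calc P.real {ω | ∑ t ∈ s, Y t ω < m - √(2 * b * m * L)}
        ≤ P.real {ω | ∑ t ∈ s, Y t ω ≤ m - √(2 * b * m * L)} :=
          measureReal_mono fun ω (hω : _ < m - _) => hω.le
      _ ≤ Real.exp (-(√(2 * b * m * L) ^ 2 / (2 * b * m))) :=
          measureReal_sum_le_integral_sub_le hY hindep hbound hb_pos hm_pos (Real.sqrt_nonneg _)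
      _ = Real.exp (-L) := by
          rw [Real.sq_sqrt (by positivity), mul_div_cancel_left₀ L (by positivity)]

end LowerTail

section MeanVariance

variable {H Ω : Type*} [NormedAddCommGroup H] [MeasurableSpace Ω] {P : Measure Ω}
  [IsProbabilityMeasure P] {f : Ω → H} {d : ℝ}

lemma memLp_of_norm_sub_le (hf : AEStronglyMeasurable f P) (hd : ∀ ω ω', ‖f ω - f ω'‖ ≤ d)
    (p : ENNReal) : MemLp f p P := by
  obtain ⟨ω₀⟩ := nonempty_of_isProbabilityMeasure P
  exact .of_bound hf (d + ‖f ω₀‖) <| .of_forall fun ω =>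
    (norm_le_norm_sub_add (f ω) (f ω₀)).trans (by gcongr; exact hd ω ω₀)

variable [InnerProductSpace ℝ H] [CompleteSpace H]

lemma integral_norm_sub_sq_eq_add (hf : MemLp f 2 P) (c : H) :
    ∫ ω, ‖f ω - c‖ ^ 2 ∂P =
      ∫ ω, ‖f ω - ∫ ω', f ω' ∂P‖ ^ 2 ∂P + ‖(∫ ω, f ω ∂P) - c‖ ^ 2 := by
  set m := ∫ ω, f ω ∂P
  have hdev : Integrable (fun ω => f ω - m) P :=
    (hf.integrable one_le_two).sub (integrable_const m)
  have hsq : Integrable (fun ω => ‖f ω - m‖ ^ 2) P :=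
    (hf.sub (memLp_const m)).integrable_norm_pow two_ne_zero
  have hcross : Integrable (fun ω => 2 * inner ℝ (m - c) (f ω - m)) P :=
    (hdev.const_inner (m - c)).const_mul 2
  have hsq_cross : Integrable (fun ω => ‖f ω - m‖ ^ 2 + 2 * inner ℝ (m - c) (f ω - m)) P :=
    hsq.add hcross
  have hcentred : ∫ ω, (f ω - m) ∂P = 0 := by
    simpa only [average_eq_integral] using integral_sub_average P f
  calc ∫ ω, ‖f ω - c‖ ^ 2 ∂P
      = ∫ ω, (‖f ω - m‖ ^ 2 + 2 * inner ℝ (m - c) (f ω - m) + ‖m - c‖ ^ 2) ∂P := by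
        congr with ω
        rw [← sub_add_sub_cancel (f ω) m c, norm_add_sq_real, real_inner_comm]
    _ = ∫ ω, ‖f ω - m‖ ^ 2 ∂P + ‖m - c‖ ^ 2 := by
        rw [integral_add hsq_cross (integrable_const _), integral_add hsq hcross,
          integral_const_mul, integral_inner hdev, hcentred, inner_zero_right, integral_const,
          probReal_univ, one_smul, mul_zero, add_zero]

lemma integral_norm_sub_integral_sq_add_norm_sub_sq_le (hf : AEStronglyMeasurable f P)
    (hd : ∀ ω ω', ‖f ω - f ω'‖ ≤ d) (ω₀ : Ω) :
    ∫ ω, ‖f ω - ∫ ω', f ω' ∂P‖ ^ 2 ∂P + ‖(∫ ω, f ω ∂P) - f ω₀‖ ^ 2 ≤ d ^ 2 := by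
  rw [← integral_norm_sub_sq_eq_add (memLp_of_norm_sub_le hf hd 2)]
  have hsq : ∀ ω, ‖f ω - f ω₀‖ ^ 2 ≤ d ^ 2 := fun ω => by
    have := hd ω ω₀
    gcongr
  simpa using integral_mono_of_nonneg (μ := P) (.of_forall fun ω => sq_nonneg ‖f ω - f ω₀‖)
    (integrable_const (d ^ 2)) (.of_forall hsq)

lemma norm_sub_integral_le_of_norm_sub_le (hf : AEStronglyMeasurable f P)
    (hd : ∀ ω ω', ‖f ω - f ω'‖ ≤ d) (ω₀ : Ω) : ‖f ω₀ - ∫ ω, f ω ∂P‖ ≤ d := by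
  have hd_nonneg : 0 ≤ d := (norm_nonneg _).trans (hd ω₀ ω₀)
  rw [norm_sub_rev]
  refine le_of_sq_le_sq ?_ hd_nonneg
  have hvar : 0 ≤ ∫ ω, ‖f ω - ∫ ω', f ω' ∂P‖ ^ 2 ∂P := by positivity
  linarith [integral_norm_sub_integral_sq_add_norm_sub_sq_le hf hd ω₀]

lemma two_mul_integral_norm_sub_integral_sq_le (hf : AEStronglyMeasurable f P)
    (hd : ∀ ω ω', ‖f ω - f ω'‖ ≤ d) : 2 * ∫ ω, ‖f ω - ∫ ω', f ω' ∂P‖ ^ 2 ∂P ≤ d ^ 2 := by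
  set m := ∫ ω, f ω ∂P
  set v := ∫ ω, ‖f ω - m‖ ^ 2 ∂P
  have hsq : ∀ ω, ‖f ω - m‖ ^ 2 ≤ d ^ 2 - v := fun ω => by
    rw [norm_sub_rev]
    linarith [integral_norm_sub_integral_sq_add_norm_sub_sq_le hf hd ω]
  have hv_le : v ≤ ∫ _ω, (d ^ 2 - v) ∂P := integral_mono_of_nonneg
    (.of_forall fun ω => sq_nonneg ‖f ω - m‖) (integrable_const _) (.of_forall hsq)
  rw [integral_const, probReal_univ, one_smul] at hv_le
  linarith

end MeanVariance

section EmpiricalVariance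

variable {𝒳 H : Type*} [NormedAddCommGroup H] [InnerProductSpace ℝ H] {φ : 𝒳 → H} {n : ℕ}

lemma sub_one_mul_empVar (hn : 2 ≤ n) (x : ℕ → 𝒳) (c : H) :
    ((n : ℝ) - 1) * empVar φ n x =
      ∑ t ∈ range n, ‖φ (x t) - c‖ ^ 2 - n * ‖empKME φ n x - c‖ ^ 2 := by
  have hn_two : (2 : ℝ) ≤ n := by exact_mod_cast hn
  set S : H := ∑ t ∈ range n, φ (x t) with hS
  have hempVar : ((n : ℝ) - 1) * empVar φ n x =
      ∑ t ∈ range n, ‖φ (x t)‖ ^ 2 - (n : ℝ)⁻¹ * ‖S‖ ^ 2 := by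
    rw [empVar, mul_inv_cancel_left₀ (by linarith), ← real_inner_self_eq_norm_sq S]
    simp only [kerG, real_inner_self_eq_norm_sq, ← inner_sum, Finset.sum_sub_distrib,
      ← Finset.mul_sum, ← sum_inner, ← hS]
  have hscatter : ∑ t ∈ range n, ‖φ (x t) - c‖ ^ 2 =
      ∑ t ∈ range n, ‖φ (x t)‖ ^ 2 - 2 * inner ℝ S c + n * ‖c‖ ^ 2 := by
    simp only [norm_sub_sq_real, Finset.sum_add_distrib, Finset.sum_sub_distrib, ← Finset.mul_sum,
      ← sum_inner, ← hS, Finset.sum_const, Finset.card_range, nsmul_eq_mul]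
  have hbias : n * ‖empKME φ n x - c‖ ^ 2 =
      (n : ℝ)⁻¹ * ‖S‖ ^ 2 - 2 * inner ℝ S c + n * ‖c‖ ^ 2 := by
    rw [empKME, norm_sub_sq_real, ← hS, norm_smul, real_inner_smul_left,
      Real.norm_of_nonneg (by positivity)]
    field_simp
  linarith

lemma empVar_nonneg (hn : 2 ≤ n) (x : ℕ → 𝒳) : 0 ≤ empVar φ n x := by
  have hn_two : (2 : ℝ) ≤ n := by exact_mod_cast hn
  refine nonneg_of_mul_nonneg_right ?_ (show (0 : ℝ) < n - 1 by linarith)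
  rw [sub_one_mul_empVar hn x (empKME φ n x), sub_self, norm_zero, zero_pow two_ne_zero,
    mul_zero, sub_zero]
  positivity

lemma mean_norm_sub_sq_sub_le_empVar (hn : 2 ≤ n) (x : ℕ → 𝒳) (c : H) :
    (n : ℝ)⁻¹ * ∑ t ∈ range n, ‖φ (x t) - c‖ ^ 2 - ‖empKME φ n x - c‖ ^ 2 ≤ empVar φ n x := by
  have hn_pos : (0 : ℝ) < n := by exact_mod_cast (zero_lt_two.trans_le hn)
  have hscatter : (n : ℝ)⁻¹ * ∑ t ∈ range n, ‖φ (x t) - c‖ ^ 2 - ‖empKME φ n x - c‖ ^ 2 =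
      (n : ℝ)⁻¹ * (((n : ℝ) - 1) * empVar φ n x) := by
    rw [sub_one_mul_empVar hn x c]
    field_simp
  rw [hscatter, inv_mul_le_iff₀ hn_pos]
  linarith [empVar_nonneg (φ := φ) hn x]

lemma sum_sub_eq_smul_empKME_sub (hn : n ≠ 0) (x : ℕ → 𝒳) (c : H) :
    ∑ t ∈ range n, (φ (x t) - c) = (n : ℝ) • (empKME φ n x - c) := by
  rw [empKME, smul_sub, smul_inv_smul₀ (Nat.cast_ne_zero.2 hn), Finset.sum_sub_distrib,
    Finset.sum_const, Finset.card_range, Nat.cast_smul_eq_nsmul]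

end EmpiricalVariance

section KernelRange

variable {𝒳 H : Type*} [NormedAddCommGroup H] [InnerProductSpace ℝ H] {φ : 𝒳 → H}

lemma kerG_sub_kerG_le_kerRange (hφ : ∃ C : ℝ, ∀ x, ‖φ x‖ ≤ C) (x y x' y' : 𝒳) :
    kerG φ x y - kerG φ x' y' ≤ kerRange φ := by
  obtain ⟨C, hC⟩ := hφ
  have hbound : ∀ p : 𝒳 × 𝒳, |kerG φ p.1 p.2| ≤ C * C := fun p =>
    (abs_real_inner_le_norm _ _).trans <|
      mul_le_mul (hC _) (hC _) (norm_nonneg _) ((norm_nonneg _).trans (hC p.1))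
  have habove : BddAbove (Set.range fun p : 𝒳 × 𝒳 => kerG φ p.1 p.2) :=
    ⟨C * C, Set.forall_mem_range.2 fun p => (abs_le.1 (hbound p)).2⟩
  have hbelow : BddBelow (Set.range fun p : 𝒳 × 𝒳 => kerG φ p.1 p.2) :=
    ⟨-(C * C), Set.forall_mem_range.2 fun p => (abs_le.1 (hbound p)).1⟩
  exact sub_le_sub (le_ciSup habove (x, y)) (ciInf_le hbelow (x', y'))

lemma norm_sub_le_sqrt_two_mul_kerRange (hφ : ∃ C : ℝ, ∀ x, ‖φ x‖ ≤ C) (x y : 𝒳) :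
    ‖φ x - φ y‖ ≤ √(2 * kerRange φ) := by
  refine Real.le_sqrt_of_sq_le ?_
  have hexpand : ‖φ x - φ y‖ ^ 2 =
      (kerG φ x x - kerG φ x y) + (kerG φ y y - kerG φ x y) := by
    rw [norm_sub_sq_real, kerG, kerG, kerG, real_inner_self_eq_norm_sq, real_inner_self_eq_norm_sq]
    ring
  linarith [kerG_sub_kerG_le_kerRange hφ x x x y, kerG_sub_kerG_le_kerRange hφ y y x y]

end KernelRange

section SelfBounding

variable {σ u M D A V : ℝ}

lemma le_sqrt_add_of_sub_sq_le (hσ : 0 ≤ σ) (hu : 0 ≤ u) (hM : 0 ≤ M) (hσM : 2 * σ ^ 2 ≤ M ^ 2)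
    (hD : 0 ≤ D) (hD_le : D ≤ σ * u + M * u ^ 2 / 3) (hA : σ ^ 2 - M * σ * u ≤ A)
    (hV : A - D ^ 2 ≤ V) : σ ≤ √V + 3 / 2 * (M * u) := by
  rcases le_or_gt σ (3 / 2 * (M * u)) with hσ_le | hσ_gt
  · exact hσ_le.trans (le_add_of_nonneg_left (Real.sqrt_nonneg V))
  have hD_le_mul : D ≤ 11 / 9 * (u * σ) := by nlinarith
  have hM_pos : 0 < M := hM.lt_of_ne' <| by
    rintro rfl
    nlinarith
  have hu_le : u * σ ≤ M / 3 := le_of_mul_le_mul_left (by nlinarith) hM_pos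
  have hD_sq : D ^ 2 ≤ M * σ * u / 2 := by
    have huσ : 0 ≤ u * σ := mul_nonneg hu hσ
    calc D ^ 2 ≤ (11 / 9 * (u * σ)) ^ 2 := by gcongr
      _ = 121 / 81 * (u * σ) * (u * σ) := by ring
      _ ≤ 121 / 81 * (M / 3) * (u * σ) := by gcongr
      _ ≤ M * σ * u / 2 := by nlinarith [mul_nonneg hM huσ]
  have hsq : (σ - 3 / 2 * (M * u)) ^ 2 ≤ V := by
    nlinarith [mul_nonneg (mul_nonneg hM hu) (sub_nonneg.2 hσ_gt.le)]
  linarith [Real.le_sqrt_of_sq_le hsq]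

lemma le_sqrt_mul_add_of_sub_sq_le (hσ : 0 ≤ σ) (hu : 0 ≤ u) (hM : 0 ≤ M)
    (hσM : 2 * σ ^ 2 ≤ M ^ 2) (hD : 0 ≤ D) (hD_le : D ≤ σ * u + M * u ^ 2 / 3)
    (hA : σ ^ 2 - M * σ * u ≤ A) (hV : A - D ^ 2 ≤ V) : D ≤ √V * u + 11 / 6 * (M * u ^ 2) := by
  have hσ_le := le_sqrt_add_of_sub_sq_le hσ hu hM hσM hD hD_le hA hV
  calc D ≤ σ * u + M * u ^ 2 / 3 := hD_le
    _ ≤ (√V + 3 / 2 * (M * u)) * u + M * u ^ 2 / 3 := by gcongr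
    _ = √V * u + 11 / 6 * (M * u ^ 2) := by ring

end SelfBounding

section EmpiricalBernstein

variable {𝒳 H Ω : Type*} [MeasurableSpace 𝒳] [NormedAddCommGroup H] [InnerProductSpace ℝ H]
  [MeasurableSpace Ω] {P : Measure Ω} {φ : 𝒳 → H} {ν : Measure 𝒳}

/-- The population variance `E_{X∼ν}‖φ(X) − μ_ν‖²` of the feature map, which `empVar` estimates. -/
def featureVar (φ : 𝒳 → H) (ν : Measure 𝒳) : ℝ :=
  ∫ x, ‖φ x - KME φ ν‖ ^ 2 ∂ν

lemma featureVar_nonneg (φ : 𝒳 → H) (ν : Measure 𝒳) : 0 ≤ featureVar φ ν :=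
  integral_nonneg fun _ => by positivity

variable [MeasurableSpace H] [BorelSpace H]

lemma integral_norm_comp_sub_KME_sq (hφ : Measurable φ) {X : Ω → 𝒳} (hX : AEMeasurable X P)
    (hlaw : P.map X = ν) : ∫ ω, ‖φ (X ω) - KME φ ν‖ ^ 2 ∂P = featureVar φ ν := by
  calc ∫ ω, ‖φ (X ω) - KME φ ν‖ ^ 2 ∂P = ∫ x, ‖φ x - KME φ ν‖ ^ 2 ∂(P.map X) :=
        (integral_map hX ((hφ.sub_const _).norm.pow_const 2).aestronglyMeasurable).symm
    _ = featureVar φ ν := by rw [hlaw, featureVar]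

variable [CompleteSpace H] [SecondCountableTopology H]

lemma integral_comp_sub_KME_eq_zero [IsProbabilityMeasure ν] (hφ : Measurable φ) {X : Ω → 𝒳}
    (hX : AEMeasurable X P) (hlaw : P.map X = ν) : ∫ ω, (φ (X ω) - KME φ ν) ∂P = 0 := by
  calc ∫ ω, (φ (X ω) - KME φ ν) ∂P = ∫ x, (φ x - KME φ ν) ∂(P.map X) :=
        (integral_map hX (hφ.sub_const _).aestronglyMeasurable).symm
    _ = 0 := by
        simpa only [hlaw, KME, average_eq_integral] using integral_sub_average ν φ

variable [IsProbabilityMeasure P] {n : ℕ} {X : ℕ → Ω → 𝒳} {d L : ℝ}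

lemma measureReal_sqrt_featureVar_lt_norm_empKME_sub_KME_le (hφ : Measurable φ)
    (hd : ∀ x y, ‖φ x - φ y‖ ≤ d) (hn : n ≠ 0) (hX : ∀ t, AEMeasurable (X t) P)
    (hlaw : ∀ t, P.map (X t) = ν) (hindep : iIndepFun X P) (hL : 0 ≤ L) :
    P.real {ω | √(featureVar φ ν) * √(2 * L / n) + d * √(2 * L / n) ^ 2 / 3 <
      ‖empKME φ n (fun t => X t ω) - KME φ ν‖} ≤ 2 * Real.exp (-L) := by
  have : IsProbabilityMeasure ν := hlaw 0 ▸ Measure.isProbabilityMeasure_map (hX 0)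
  obtain ⟨x₀⟩ := nonempty_of_isProbabilityMeasure ν
  have hbernstein := measureReal_sqrt_add_lt_norm_sum_le (P := P)
    (Z := fun t ω => φ (X t ω) - KME φ ν) (s := range n)
    (fun t => (hφ.comp_aemeasurable (hX t)).sub_const _)
    (hindep.comp (fun _ x => φ x - KME φ ν) fun _ => hφ.sub_const _)
    (fun t => integral_comp_sub_KME_eq_zero hφ (hX t) (hlaw t))
    (fun t => .of_forall fun ω =>
      norm_sub_integral_le_of_norm_sub_le hφ.aestronglyMeasurable hd (X t ω))
    ((norm_nonneg _).trans (hd x₀ x₀)) hL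
  simp only [fun t => integral_norm_comp_sub_KME_sq hφ (hX t) (hlaw t), Finset.sum_const,
    Finset.card_range, nsmul_eq_mul, sqrt_two_mul_nat_mul_eq hn (featureVar_nonneg φ ν),
    sum_sub_eq_smul_empKME_sub hn, norm_smul, Real.norm_natCast] at hbernstein
  refine hbernstein.trans' (measureReal_mono fun ω hω => ?_)
  have hn_pos : (0 : ℝ) < n := by positivity
  rw [Set.mem_ofPred_eq, ← mul_lt_mul_iff_right₀ hn_pos, Real.sq_sqrt (by positivity)] at hω
  refine hω.trans_eq' ?_
  field_simp

lemma measureReal_mean_norm_sub_sq_lt_featureVar_sub_le (hφ : Measurable φ)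
    (hd : ∀ x y, ‖φ x - φ y‖ ≤ d) (hn : n ≠ 0) (hX : ∀ t, AEMeasurable (X t) P)
    (hlaw : ∀ t, P.map (X t) = ν) (hindep : iIndepFun X P) (hL : 0 ≤ L) :
    P.real {ω | (n : ℝ)⁻¹ * ∑ t ∈ range n, ‖φ (X t ω) - KME φ ν‖ ^ 2 <
      featureVar φ ν - d * √(featureVar φ ν) * √(2 * L / n)} ≤ Real.exp (-L) := by
  have : IsProbabilityMeasure ν := hlaw 0 ▸ Measure.isProbabilityMeasure_map (hX 0)
  obtain ⟨x₀⟩ := nonempty_of_isProbabilityMeasure ν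
  have hd_nonneg : 0 ≤ d := (norm_nonneg _).trans (hd x₀ x₀)
  have hdev : ∀ x, ‖φ x - KME φ ν‖ ^ 2 ∈ Set.Icc 0 (d ^ 2) := fun x =>
    ⟨by positivity, pow_le_pow_left₀ (norm_nonneg _)
      (norm_sub_integral_le_of_norm_sub_le hφ.aestronglyMeasurable hd x) 2⟩
  have hdev_meas : Measurable fun x => ‖φ x - KME φ ν‖ ^ 2 := by fun_prop
  have htail := measureReal_sum_lt_integral_sub_sqrt_le (P := P)
    (Y := fun t ω => ‖φ (X t ω) - KME φ ν‖ ^ 2) (s := range n)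
    (fun t => hdev_meas.comp_aemeasurable (hX t)) (hindep.comp _ fun _ => hdev_meas)
    (fun t => .of_forall fun ω => hdev (X t ω)) (sq_nonneg d) hL
  have hsqrt : √(2 * d ^ 2 * (n * featureVar φ ν) * L) =
      n * (d * √(featureVar φ ν) * √(2 * L / n)) := by
    rw [← Real.sqrt_sq hd_nonneg, ← Real.sqrt_mul (sq_nonneg d), Real.sqrt_sq hd_nonneg,
      ← sqrt_two_mul_nat_mul_eq hn (mul_nonneg (sq_nonneg d) (featureVar_nonneg φ ν))]
    congr 1
    ring
  simp only [fun t => integral_norm_comp_sub_KME_sq hφ (hX t) (hlaw t), Finset.sum_const,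
    Finset.card_range, nsmul_eq_mul, hsqrt, ← mul_sub] at htail
  refine htail.trans' (measureReal_mono fun ω hω => ?_)
  rwa [Set.mem_ofPred_eq, inv_mul_lt_iff₀ (by positivity)] at hω

theorem measureReal_sqrt_empVar_lt_norm_empKME_sub_KME_le (hφ : Measurable φ)
    (hd : ∀ x y, ‖φ x - φ y‖ ≤ d) (hn : 2 ≤ n) (hX : ∀ t, AEMeasurable (X t) P)
    (hlaw : ∀ t, P.map (X t) = ν) (hindep : iIndepFun X P) (hL : 0 ≤ L) :
    P.real {ω | √(empVar φ n fun t => X t ω) * √(2 * L / n) + 11 / 3 * d * (L / n) <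
      ‖empKME φ n (fun t => X t ω) - KME φ ν‖} ≤ 3 * Real.exp (-L) := by
  have hn_zero : n ≠ 0 := by omega
  have : IsProbabilityMeasure ν := hlaw 0 ▸ Measure.isProbabilityMeasure_map (hX 0)
  obtain ⟨x₀⟩ := nonempty_of_isProbabilityMeasure ν
  have hd_nonneg : 0 ≤ d := (norm_nonneg _).trans (hd x₀ x₀)
  have hvar_le : 2 * √(featureVar φ ν) ^ 2 ≤ d ^ 2 := by
    rw [Real.sq_sqrt (featureVar_nonneg φ ν)]
    exact two_mul_integral_norm_sub_integral_sq_le hφ.aestronglyMeasurable hd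
  have hu_sq : √(2 * L / n) ^ 2 = 2 * L / n := Real.sq_sqrt (by positivity)
  calc _ ≤ P.real ({ω | √(featureVar φ ν) * √(2 * L / n) + d * √(2 * L / n) ^ 2 / 3 <
            ‖empKME φ n (fun t => X t ω) - KME φ ν‖} ∪
          {ω | (n : ℝ)⁻¹ * ∑ t ∈ range n, ‖φ (X t ω) - KME φ ν‖ ^ 2 <
            featureVar φ ν - d * √(featureVar φ ν) * √(2 * L / n)}) := by
        refine measureReal_mono fun ω hω => ?_
        contrapose! hω
        simp only [Set.mem_union, Set.mem_ofPred_eq, not_or, not_lt] at hω ⊢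
        have hself := le_sqrt_mul_add_of_sub_sq_le (Real.sqrt_nonneg _) (Real.sqrt_nonneg _)
          hd_nonneg hvar_le (norm_nonneg _) hω.1
          (by rw [Real.sq_sqrt (featureVar_nonneg φ ν)]; exact hω.2)
          (mean_norm_sub_sq_sub_le_empVar hn (fun t => X t ω) (KME φ ν))
        rw [hu_sq] at hself
        exact hself.trans_eq (by ring)
    _ ≤ 2 * Real.exp (-L) + Real.exp (-L) :=
        (measureReal_union_le _ _).trans <| add_le_add
          (measureReal_sqrt_featureVar_lt_norm_empKME_sub_KME_le hφ hd hn_zero hX hlaw hindep hL)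
          (measureReal_mean_norm_sub_sq_lt_featureVar_sub_le hφ hd hn_zero hX hlaw hindep hL)
    _ = 3 * Real.exp (-L) := by ring

theorem measureReal_sqrt_empVar_add_kerRange_lt_norm_empKME_sub_KME_le (hφ : Measurable φ)
    (hφbdd : ∃ C : ℝ, ∀ x, ‖φ x‖ ≤ C) (hn : 2 ≤ n) (hX : ∀ t, AEMeasurable (X t) P)
    (hlaw : ∀ t, P.map (X t) = ν) (hindep : iIndepFun X P) (hL : 0 ≤ L) :
    P.real {ω | √(empVar φ n fun t => X t ω) * √(2 * L / n) + 16 / 3 * √(kerRange φ) * (L / n) <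
      ‖empKME φ n (fun t => X t ω) - KME φ ν‖} ≤ 3 * Real.exp (-L) := by
  refine (measureReal_sqrt_empVar_lt_norm_empKME_sub_KME_le hφ
    (norm_sub_le_sqrt_two_mul_kerRange hφbdd) hn hX hlaw hindep hL).trans'
      (measureReal_mono fun ω hω => ?_)
  have hconst : 11 / 3 * √2 ≤ 16 / 3 := by
    nlinarith [Real.sq_sqrt (zero_le_two (α := ℝ)), Real.sqrt_nonneg 2]
  rw [Set.mem_ofPred_eq] at hω ⊢
  refine hω.trans_le' ?_
  rw [Real.sqrt_mul zero_le_two, ← mul_assoc]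
  gcongr

end EmpiricalBernstein

lemma one_sub_add_le_measureReal_of_compl_subset_union {Ω : Type*} [MeasurableSpace Ω]
    {P : Measure Ω} [IsProbabilityMeasure P] {A B G : Set Ω} {a b : ℝ} (hA : P.real A ≤ a)
    (hB : P.real B ≤ b) (hG : Gᶜ ⊆ A ∪ B) : 1 - (a + b) ≤ P.real G := by
  have hcompl : P.real Gᶜ ≤ a + b :=
    (measureReal_mono hG).trans ((measureReal_union_le A B).trans (add_le_add hA hB))
  have htotal : 1 ≤ P.real G + P.real Gᶜ := by
    simpa using measureReal_union_le (μ := P) G Gᶜ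
  linarith

theorem varianceAware_empirical_MMD_bound_general
    {𝒳 H Ω : Type*} [MeasurableSpace 𝒳]
    [NormedAddCommGroup H] [InnerProductSpace ℝ H] [CompleteSpace H]
    [SecondCountableTopology H] [MeasurableSpace H] [BorelSpace H] [MeasurableSpace Ω]
    (P : Measure Ω) [IsProbabilityMeasure P]
    (φ : 𝒳 → H) (hφmeas : Measurable φ) (hφbdd : ∃ C : ℝ, ∀ x : 𝒳, ‖φ x‖ ≤ C)
    (νi νj : Measure 𝒳) (n : ℕ) (hn : 2 ≤ n) (Xi Xj : ℕ → Ω → 𝒳)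
    (hXimeas : ∀ t, AEMeasurable (Xi t) P) (hXjmeas : ∀ t, AEMeasurable (Xj t) P)
    (hXilaw : ∀ t, Measure.map (Xi t) P = νi) (hXjlaw : ∀ t, Measure.map (Xj t) P = νj)
    (hXiindep : iIndepFun Xi P) (hXjindep : iIndepFun Xj P)
    (δ' : ℝ) (hδ0 : 0 < δ') (hδ1 : δ' ≤ 1) :
    ENNReal.ofReal (1 - δ') ≤
      P {ω | |‖empKME φ n (fun t => Xj t ω) - empKME φ n (fun t => Xi t ω)‖
              - ‖KME φ νj - KME φ νi‖|
          ≤ (√(empVar φ n (fun t => Xi t ω)) + √(empVar φ n (fun t => Xj t ω)))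
              * √(2 * Real.log (8 / δ') / n)
            + (32 / 3) * √(kerRange φ) * (Real.log (8 / δ') / n)} := by
  set L := Real.log (8 / δ')
  have hL : 0 ≤ L := Real.log_nonneg (by rw [le_div_iff₀ hδ0]; linarith)
  have hexp : Real.exp (-L) = δ' / 8 := by
    rw [Real.exp_neg, Real.exp_log (by positivity), inv_div]
  have hdev_i := measureReal_sqrt_empVar_add_kerRange_lt_norm_empKME_sub_KME_le hφmeas hφbdd hn
    hXimeas hXilaw hXiindep hL
  have hdev_j := measureReal_sqrt_empVar_add_kerRange_lt_norm_empKME_sub_KME_le hφmeas hφbdd hn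
    hXjmeas hXjlaw hXjindep hL
  rw [ENNReal.ofReal_le_iff_le_toReal (measure_ne_top P _)]
  refine le_trans ?_ (one_sub_add_le_measureReal_of_compl_subset_union hdev_i hdev_j fun ω => ?_)
  · linarith
  · contrapose!
    simp only [Set.mem_union, Set.mem_ofPred_eq, Set.mem_compl_iff, not_or, not_not, not_lt]
    rintro ⟨hi, hj⟩
    have htriangle := dist_dist_dist_le (empKME φ n fun t => Xj t ω) (empKME φ n fun t => Xi t ω)
      (KME φ νj) (KME φ νi)
    simp only [dist_eq_norm, Real.norm_eq_abs] at htriangle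
    linarith

/-- (Lemma A.4: variance-aware empirical two-sample bound on the MMD.) For mutually
independent i.i.d. samples `X^i_1,…,X^i_n ∼ ν_i` and `X^j_1,…,X^j_n ∼ ν_j`, with
probability at least `1 − δ'`,
`| ‖μ̂_j − μ̂_i‖ − ‖μ_j − μ_i‖ | ≤ (√𝒱̂_i + √𝒱̂_j) √(2 log(8/δ')/n) + (32/3) √g̃ log(8/δ')/n`. -/
theorem varianceAware_empirical_MMD_bound
    {𝒳 H Ω : Type*} [MeasurableSpace 𝒳] [AddCommGroup 𝒳]
    [NormedAddCommGroup H] [InnerProductSpace ℝ H] [CompleteSpace H]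
    [SecondCountableTopology H] [MeasurableSpace H] [BorelSpace H] [MeasurableSpace Ω]
    (P : Measure Ω) [IsProbabilityMeasure P]
    (φ : 𝒳 → H) (hφmeas : Measurable φ) (hφbdd : ∃ C : ℝ, ∀ x : 𝒳, ‖φ x‖ ≤ C)
    (hTI : ∃ Ψ : 𝒳 → ℝ, ∀ x y : 𝒳, kerG φ x y = Ψ (x - y))
    (νi νj : Measure 𝒳) [IsProbabilityMeasure νi] [IsProbabilityMeasure νj]
    (n : ℕ) (hn : 2 ≤ n)
    (Xi Xj : ℕ → Ω → 𝒳)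
    (hXimeas : ∀ t, Measurable (Xi t)) (hXjmeas : ∀ t, Measurable (Xj t))
    (hXilaw : ∀ t, Measure.map (Xi t) P = νi)
    (hXjlaw : ∀ t, Measure.map (Xj t) P = νj)
    (hindep : iIndepFun (Sum.elim Xi Xj) P)
    (δ' : ℝ) (hδ0 : 0 < δ') (hδ1 : δ' ≤ 1) :
    ENNReal.ofReal (1 - δ') ≤
      P {ω | |‖empKME φ n (fun t => Xj t ω) - empKME φ n (fun t => Xi t ω)‖
              - ‖KME φ νj - KME φ νi‖|
          ≤ (Real.sqrt (empVar φ n (fun t => Xi t ω))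
              + Real.sqrt (empVar φ n (fun t => Xj t ω)))
              * Real.sqrt (2 * Real.log (8 / δ') / n)
            + (32 / 3) * Real.sqrt (kerRange φ) * (Real.log (8 / δ') / n)} := by
  exact varianceAware_empirical_MMD_bound_general P φ hφmeas hφbdd νi νj n hn Xi Xj
    (fun t => (hXimeas t).aemeasurable) (fun t => (hXjmeas t).aemeasurable) hXilaw hXjlaw
    (hindep.precomp (g := Sum.inl) Sum.inl_injective)
    (hindep.precomp (g := Sum.inr) Sum.inr_injective) δ' hδ0 hδ1

end
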